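/- Let 0 ≤ μ ≤ 1/3 and set θ = (1/4)(√(5μ+1) − √(1−3μ)). Then the tuple γ0 = θ/2 + √(μ+θ²)/2, γ1 = √(1−3μ)/2 + (θ√(1−3μ) − 3μ)/(2√(μ+θ²)), γ2 = −(3/4)√(1−3μ) − (1/4)√(5μ+1), γ3 = √(1−3μ)/2 − (θ√(1−3μ) − 3μ)/(2√(μ+θ²)), γ4 = θ/2 − √(μ+θ²)/2 is a solution of the system S2(μ, 0). -/

import Mathlib

/-- The `k = δ = 2` reduced system `S2(μ,η)` for `(γ0, γ1, γ2, γ3, γ4)`. -/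
def S2 (μ η γ0 γ1 γ2 γ3 γ4 : ℝ) : Prop :=
  2 * γ0 * γ4 = -μ / 2 ∧
  2 * γ0 * γ3 + 2 * γ1 * γ4 = (1 / 2) * η * μ + 3 * μ ∧
  2 * γ0 * γ2 + 2 * γ1 * γ3 + 2 * γ2 * γ4 = -3 * η * μ - (11 / 2) * μ + 1 / 2 ∧
  2 * γ0 * γ1 + 2 * γ1 * γ2 + 2 * γ2 * γ3 + 2 * γ3 * γ4
    = (11 / 2) * η * μ - 2 * η + 3 * μ - 2 ∧
  γ0 ^ 2 + γ1 ^ 2 + γ2 ^ 2 + γ3 ^ 2 + γ4 ^ 2 = -3 * η * μ + 2 * η + 3 / 2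

/-!
View `γ` as the polynomial `∑ γᵢ zⁱ`; the equations of `S2` prescribe the coefficients of
`γ(z) γ(z⁻¹)`. For `η = 0` the prescribed Laurent polynomial is divisible by
`((1 - z) (1 - z⁻¹))²`, which suggests `γ(z) = (1 - z)² q(z)` with `q` quadratic and leaves three
equations for the coefficients of `q`. With `s = √(1 - 3μ)` and `r = √(μ + θ²)` they are solved by
`q(z) = (θ + r) / 2 + (s / 2 + θ) z + (θ - r) / 2 z²` as soon as `2θ² + sθ = μ`, and the `θ` of the
theorem is a root of this equation. The same equation gives `θs - 3μ = -2r²`, so the quotients in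
`γ₁` and `γ₃` are polynomial: `γ₁ = s / 2 - r` and `γ₃ = s / 2 + r`.
-/

-- The arguments of `S2` are the coefficients of `(1 - z)² (q₀ + q₁ z + q₂ z²)`.
theorem S2_zero_iff_of_double_root_one (μ q₀ q₁ q₂ : ℝ) :
    S2 μ 0 q₀ (q₁ - 2 * q₀) (q₀ - 2 * q₁ + q₂) (q₁ - 2 * q₂) q₂ ↔
      q₀ * q₂ = -μ / 4 ∧ q₁ * (q₀ + q₂) = μ / 2 ∧ q₀ ^ 2 + q₁ ^ 2 + q₂ ^ 2 = (1 + 3 * μ) / 4 := by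
  constructor
  · rintro ⟨e₄, e₃, e₂, -, -⟩
    refine ⟨?_, ?_, ?_⟩
    · linear_combination (1 / 2) * e₄
    · linear_combination 2 * e₄ + (1 / 2) * e₃
    · linear_combination 5 * e₄ + 2 * e₃ + (1 / 2) * e₂
  · rintro ⟨h₂, h₁, h₀⟩
    refine ⟨?_, ?_, ?_, ?_, ?_⟩
    · linear_combination 2 * h₂
    · linear_combination 2 * h₁ - 8 * h₂
    · linear_combination 2 * h₀ - 8 * h₁ + 12 * h₂
    · linear_combination -8 * h₀ + 14 * h₁ - 8 * h₂
    · linear_combination 6 * h₀ - 8 * h₁ + 2 * h₂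

theorem S2_zero_of_two_mul_sq_add_mul_eq {μ s θ r : ℝ} (hs : s ^ 2 = 1 - 3 * μ)
    (hθ : 2 * θ ^ 2 + s * θ = μ) (hr : r ^ 2 = μ + θ ^ 2) :
    S2 μ 0 (θ / 2 + r / 2) (s / 2 - r) (-s - θ) (s / 2 + r) (θ / 2 - r / 2) := by
  have outer_mul : (θ / 2 + r / 2) * (θ / 2 - r / 2) = -μ / 4 := by
    linear_combination (-1 / 4) * hr
  have middle_mul_outer_add : (s / 2 + θ) * ((θ / 2 + r / 2) + (θ / 2 - r / 2)) = μ / 2 := by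
    linear_combination (1 / 2) * hθ
  have sum_sq : (θ / 2 + r / 2) ^ 2 + (s / 2 + θ) ^ 2 + (θ / 2 - r / 2) ^ 2 = (1 + 3 * μ) / 4 := by
    linear_combination (1 / 4) * hs + hθ + (1 / 2) * hr
  convert (S2_zero_iff_of_double_root_one μ _ _ _).mpr ⟨outer_mul, middle_mul_outer_add, sum_sq⟩
    using 1 <;> ring

section Field

variable {K : Type*} [Field K] [NeZero (2 : K)] {μ s t θ r : K}

theorem two_mul_sq_add_mul_eq_of_four_mul_eq_sub (hs : s ^ 2 = 1 - 3 * μ) (ht : t ^ 2 = 5 * μ + 1)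
    (hθ : 4 * θ = t - s) : 2 * θ ^ 2 + s * θ = μ := by
  have eight_ne_zero : (2 : K) ^ 3 ≠ 0 := pow_ne_zero 3 two_ne_zero
  refine mul_left_cancel₀ eight_ne_zero ?_
  linear_combination ht - hs + (4 * θ + t + s) * hθ

-- The case `r = 0`, which occurs in the theorem at `μ = 0`, holds because `x / 0 = 0`.
theorem mul_sub_three_mul_div_two_mul_eq_neg (hθ : 2 * θ ^ 2 + s * θ = μ)
    (hr : r ^ 2 = μ + θ ^ 2) : (θ * s - 3 * μ) / (2 * r) = -r := by
  have numerator_eq : θ * s - 3 * μ = 2 * -(r * r) := by linear_combination hθ + 2 * hr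
  rw [numerator_eq, mul_div_mul_left _ _ two_ne_zero, neg_div, mul_self_div_self]

end Field

/-- **A second explicit solution of `S2(μ,0)` for `0 ≤ μ ≤ 1/3`**, with
`θ = (1/4)(√(5μ+1) - √(1-3μ))`. -/
theorem explicit_solution_S2' (μ : ℝ) (hμ0 : 0 ≤ μ) (hμ1 : μ ≤ 1 / 3) :
    let θ : ℝ := (1 / 4) * (Real.sqrt (5 * μ + 1) - Real.sqrt (1 - 3 * μ))
    S2 μ 0
      (θ / 2 + Real.sqrt (μ + θ ^ 2) / 2)
      (Real.sqrt (1 - 3 * μ) / 2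
        + (θ * Real.sqrt (1 - 3 * μ) - 3 * μ) / (2 * Real.sqrt (μ + θ ^ 2)))
      (-(3 / 4) * Real.sqrt (1 - 3 * μ) - (1 / 4) * Real.sqrt (5 * μ + 1))
      (Real.sqrt (1 - 3 * μ) / 2
        - (θ * Real.sqrt (1 - 3 * μ) - 3 * μ) / (2 * Real.sqrt (μ + θ ^ 2)))
      (θ / 2 - Real.sqrt (μ + θ ^ 2) / 2) := by
  intro θ
  have hs : √(1 - 3 * μ) ^ 2 = 1 - 3 * μ := Real.sq_sqrt (by linarith)
  have ht : √(5 * μ + 1) ^ 2 = 5 * μ + 1 := Real.sq_sqrt (by linarith)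
  have hr : √(μ + θ ^ 2) ^ 2 = μ + θ ^ 2 := Real.sq_sqrt (by positivity)
  have four_mul_θ : 4 * θ = √(5 * μ + 1) - √(1 - 3 * μ) := by ring
  have hθ : 2 * θ ^ 2 + √(1 - 3 * μ) * θ = μ :=
    two_mul_sq_add_mul_eq_of_four_mul_eq_sub hs ht four_mul_θ
  have γ₂_eq : -(3 / 4) * √(1 - 3 * μ) - (1 / 4) * √(5 * μ + 1) = -√(1 - 3 * μ) - θ := by ring
  rw [mul_sub_three_mul_div_two_mul_eq_neg hθ hr, γ₂_eq, ← sub_eq_add_neg, sub_neg_eq_add]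
  exact S2_zero_of_two_mul_sq_add_mul_eq hs hθ hr
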